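/- There is a constant c > 0 such that for all sufficiently large even N the following holds. Let 1/10 < α ≤ 1/2 be such that d = ⌈N^α⌉ divides N, let X be a set of N variables partitioned into d pairwise disjoint sets X_1,…,X_d each of size N/d, and let k be an integer with 1 ≤ k ≤ N^{(1−α)/4}. Then, for φ drawn from D, the probability that at least one set X_i is k-unbalanced with respect to φ is at least 1 − 2^{−c·N^{1/10}·log N}. -/

import Mathlib

open MvPolynomial

noncomputable section

/-- A multilinear polynomial: every exponent is at most 1. -/
def MLin {σ : Type*} {K : Type*} [CommSemiring K] (f : MvPolynomial σ K) : Prop :=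
  ∀ d ∈ f.support, ∀ i, d i ≤ 1

/-- The partial derivative matrix of a multilinear polynomial over Y ∪ Z
(Y = `inl`-variables, Z = `inr`-variables), rows and columns indexed by subsets. -/
def pdm {h : ℕ} {K : Type*} [CommSemiring K] (f : MvPolynomial (Fin h ⊕ Fin h) K) :
    Matrix (Finset (Fin h)) (Finset (Fin h)) K := fun S T =>
  f.coeff ((∑ i ∈ S, Finsupp.single (Sum.inl i) 1) + ∑ j ∈ T, Finsupp.single (Sum.inr j) 1)

/-- The field G = F(W), the field of rational functions over F in variables
`w_{i,k,j}`, `i,k,j ∈ ℕ`. -/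
abbrev Gf (F : Type*) [Field F] : Type _ := FractionRing (MvPolynomial (ℕ × ℕ × ℕ) F)

/-- The element w_{i,k,j} of G. -/
def wv (F : Type*) [Field F] (i k j : ℕ) : Gf F :=
  algebraMap (MvPolynomial (ℕ × ℕ × ℕ) F) (Gf F) (MvPolynomial.X (i, k, j))

/-- The Raz–Yehudayoff polynomials `g_{i,j}` (first argument is fuel; every
recursive call reduces `j - i` by at least 2, so fuel `N` suffices for `g_{1,N}`). -/
def RY (F : Type*) [Field F] : ℕ → ℕ → ℕ → MvPolynomial ℕ (Gf F)
  | 0, _, _ => 1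
  | fuel + 1, i, j =>
      if j < i then 1
      else (1 + X i * X j) * RY F fuel (i + 1) (j - 1)
        + ∑ k ∈ (Finset.Icc (i + 1) (j - 2)).filter (fun k => (k - i) % 2 = 1),
            C (wv F i k j) * RY F fuel i k * RY F fuel (k + 1) j

/-- The Raz–Yehudayoff polynomial `g = g_{1,N}`, in the variables `x_1, …, x_N`. -/
def razPoly (F : Type*) [Field F] (N : ℕ) : MvPolynomial ℕ (Gf F) := RY F N 1 N

/-- `|φ(S) ∩ Y|` for a partition function φ. -/
def yCount {h : ℕ} (φ : ℕ → Fin h ⊕ Fin h) (S : Finset ℕ) : ℕ :=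
  (S.filter fun x => (φ x).isLeft = true).card

/-- `|φ(S) ∩ Z|` for a partition function φ. -/
def zCount {h : ℕ} (φ : ℕ → Fin h ⊕ Fin h) (S : Finset ℕ) : ℕ :=
  (S.filter fun x => (φ x).isRight = true).card

/-- `S` is `k`-unbalanced with respect to the partition φ. -/
def kUnb {h : ℕ} (φ : ℕ → Fin h ⊕ Fin h) (k : ℕ) (S : Finset ℕ) : Prop :=
  (k : ℤ) ≤ |(yCount φ S : ℤ) - (zCount φ S : ℤ)|

/-- Extension of a partition given on `X` to all of ℕ (junk value elsewhere). -/
def extPart {h : ℕ} (hh : 0 < h) (X : Finset ℕ) (e : {x // x ∈ X} → Fin h ⊕ Fin h) :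
    ℕ → Fin h ⊕ Fin h := fun x =>
  if hx : x ∈ X then e ⟨x, hx⟩ else Sum.inl ⟨0, hh⟩

/-- Probability of an event under the uniform distribution on a finite type. -/
def unifProb {Ω : Type*} [Fintype Ω] (p : Ω → Prop) : ℝ :=
  haveI := Classical.decPred p
  ((Finset.univ.filter p).card : ℝ) / (Fintype.card Ω : ℝ)

/-- The (1,1) entry of the product `M 0 * M 1 * ⋯ * M (n-1)`. -/
def mprodVal {K : Type*} [CommSemiring K] {n w : ℕ} (hw : 0 < w)
    (M : Fin n → Matrix (Fin w) (Fin w) (MvPolynomial ℕ K)) : MvPolynomial ℕ K :=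
  (List.ofFn M).prod ⟨0, hw⟩ ⟨0, hw⟩

/-- An oblivious read-once ABP of width `w` in variables `x_1, …, x_N` with
variable order π (a permutation of `{1, …, N}`): the ℓ-th layer matrix has
entries of degree at most 1 in the single variable `x_{π(ℓ)}`. -/
def IsROABP {K : Type*} [CommSemiring K] (N w : ℕ) (π : ℕ → ℕ)
    (M : Fin N → Matrix (Fin w) (Fin w) (MvPolynomial ℕ K)) : Prop :=
  Set.BijOn π (Set.Icc 1 N) (Set.Icc 1 N) ∧
    ∀ ℓ : Fin N, ∀ i j, ∃ a b : K, M ℓ i j = C a + C b * X (π (ℓ.val + 1))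

/-- An `r`-pass syntactically multilinear ABP of width `w`. -/
def IsRPass {K : Type*} [CommSemiring K] (N w r : ℕ) (π : Fin r → ℕ → ℕ)
    (M : Fin (r * N) → Matrix (Fin w) (Fin w) (MvPolynomial ℕ K)) : Prop :=
  (∀ j, Set.BijOn (π j) (Set.Icc 1 N) (Set.Icc 1 N)) ∧
  (∀ ℓ : Fin (r * N), ∀ i j, ∃ a b : K,
      M ℓ i j = C a + C b *
        X (π ⟨ℓ.val / N, Nat.div_lt_of_lt_mul (by rw [Nat.mul_comm N r]; exact ℓ.2)⟩
            (ℓ.val % N + 1))) ∧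
  (∀ (idx : Fin (r * N + 1) → Fin w) (v : ℕ) (ℓ₁ ℓ₂ : Fin (r * N)),
      v ∈ (M ℓ₁ (idx ℓ₁.castSucc) (idx ℓ₁.succ)).vars →
      v ∈ (M ℓ₂ (idx ℓ₂.castSucc) (idx ℓ₂.succ)).vars → ℓ₁ = ℓ₂)

/-- An α-sparse ROABP with variable blocks `Xs 0, …, Xs (d-1)`, width `w` and
sparsity `t`: every entry of the `i`-th matrix is a multilinear polynomial in the
variables `Xs i` with at most `t` monomials. -/
def IsSparseROABP {K : Type*} [CommSemiring K] {d : ℕ} (w t : ℕ)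
    (Xs : Fin d → Finset ℕ) (M : Fin d → Matrix (Fin w) (Fin w) (MvPolynomial ℕ K)) : Prop :=
  ∀ ℓ i j, MLin (M ℓ i j) ∧ (M ℓ i j).vars ⊆ Xs ℓ ∧ (M ℓ i j).support.card ≤ t
/-- `S ⊆ X` is `k`-unbalanced with respect to a partition given as a map on `X`. -/
def kUnbOn {h : ℕ} (X : Finset ℕ) (e : {x // x ∈ X} → Fin h ⊕ Fin h) (k : ℕ)
    (S : Finset ℕ) : Prop :=
  (k : ℤ) ≤ |((X.attach.filter fun x => x.1 ∈ S ∧ (e x).isLeft = true).card : ℤ) -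
             ((X.attach.filter fun x => x.1 ∈ S ∧ (e x).isRight = true).card : ℤ)|

/-! Encode a partition `φ` by the set `T = φ⁻¹(Y)`. If no block `Xᵢ` is `k`-unbalanced, then
`|T ∩ Xᵢ|` takes at most `k` values, so `T ∩ Xᵢ` is one of at most `k * m.choose (m / 2)` subsets,
where `m = |Xᵢ|`. Each `T` comes from at most `(N/2)! ^ 2` of the `N!` partitions. Since
`m.choose (m / 2) ≤ 2 ^ m / √m` and `(N/2)! ^ 2 / N! ≤ N / 2 ^ N`, the probability that no block is
`k`-unbalanced is at most `N * ∏ i, k / √|Xᵢ|`. When there are about `N ^ α` blocks of equal size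
and `k ≤ N ^ ((1 - α) / 4)`, each factor is at most a fixed negative power of `N`, and the prefactor
`N` is absorbed by the square root of the product. -/

section

open Finset Filter

section UniformProbability

variable {Ω : Type*} [Fintype Ω]

lemma unifProb_eq (p : Ω → Prop) [DecidablePred p] :
    unifProb p = #{ω | p ω} / Fintype.card Ω := by
  unfold unifProb
  congr!

lemma unifProb_not [Nonempty Ω] (p : Ω → Prop) :
    unifProb (fun ω => ¬ p ω) = 1 - unifProb p := by
  classical
  have hsplit : (#{ω | p ω} + #{ω | ¬ p ω} : ℝ) = Fintype.card Ω := by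
    exact_mod_cast card_filter_add_card_filter_not (s := univ) p
  have hΩ : (Fintype.card Ω : ℝ) ≠ 0 := by exact_mod_cast Fintype.card_ne_zero
  rw [unifProb_eq, unifProb_eq, eq_sub_iff_add_eq, ← add_div, add_comm, hsplit, div_self hΩ]

end UniformProbability

section MiddleBinomial

lemma centralBinom_sq_mul_le (n : ℕ) : n.centralBinom ^ 2 * (2 * n + 1) ≤ 16 ^ n := by
  induction n with
  | zero => simp
  | succ n ih =>
    refine Nat.le_of_mul_le_mul_left (c := (n + 1) ^ 2) ?_ (by positivity)
    calc (n + 1) ^ 2 * ((n + 1).centralBinom ^ 2 * (2 * (n + 1) + 1))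
        = ((n + 1) * (n + 1).centralBinom) ^ 2 * (2 * n + 3) := by ring
      _ = (n.centralBinom ^ 2 * (2 * n + 1)) * (4 * (2 * n + 1) * (2 * n + 3)) := by
        rw [Nat.succ_mul_centralBinom_succ]; ring
      _ ≤ 16 ^ n * (4 * (2 * n + 1) * (2 * n + 3)) := by gcongr
      _ ≤ 16 ^ n * (16 * (n + 1) ^ 2) := by gcongr 16 ^ n * ?_; nlinarith
      _ = (n + 1) ^ 2 * 16 ^ (n + 1) := by ring

lemma centralBinom_succ_eq_two_mul_choose (n : ℕ) :
    (n + 1).centralBinom = 2 * (2 * n + 1).choose n := by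
  rw [Nat.centralBinom, mul_add_one, Nat.choose_succ_succ, Nat.choose_symm_half]
  ring

lemma choose_half_sq_mul_le (n : ℕ) : n.choose (n / 2) ^ 2 * n ≤ 4 ^ n := by
  rcases Nat.even_or_odd' n with ⟨j, rfl | rfl⟩
  · calc (2 * j).choose (2 * j / 2) ^ 2 * (2 * j)
        ≤ j.centralBinom ^ 2 * (2 * j + 1) := by
          rw [Nat.mul_div_cancel_left _ two_pos, Nat.centralBinom]
          gcongr
          exact Nat.le_succ _
      _ ≤ 16 ^ j := centralBinom_sq_mul_le j
      _ = 4 ^ (2 * j) := by rw [pow_mul]; norm_num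
  · have hj : (2 * j + 1) / 2 = j := by lia
    have hsucc := centralBinom_sq_mul_le (j + 1)
    rw [centralBinom_succ_eq_two_mul_choose] at hsucc
    rw [hj]
    refine Nat.le_of_mul_le_mul_left (c := 4) ?_ four_pos
    calc 4 * ((2 * j + 1).choose j ^ 2 * (2 * j + 1))
        = (2 * (2 * j + 1).choose j) ^ 2 * (2 * j + 1) := by ring
      _ ≤ (2 * (2 * j + 1).choose j) ^ 2 * (2 * (j + 1) + 1) := by gcongr; exact Nat.le_succ j
      _ ≤ 16 ^ (j + 1) := hsucc
      _ = 4 * 4 ^ (2 * j + 1) := by rw [← pow_succ', show 16 = 4 ^ 2 by rfl, ← pow_mul]; ring_nf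

lemma choose_half_le_two_pow_div_sqrt {n : ℕ} (hn : 0 < n) :
    (n.choose (n / 2) : ℝ) ≤ 2 ^ n / √n := by
  have hsq : (n.choose (n / 2) : ℝ) ^ 2 * n ≤ 4 ^ n := by exact_mod_cast choose_half_sq_mul_le n
  rw [le_div_iff₀ (by positivity)]
  refine (sq_le_sq₀ (by positivity) (by positivity)).1 ?_
  calc ((n.choose (n / 2) : ℝ) * √n) ^ 2 = (n.choose (n / 2) : ℝ) ^ 2 * n := by
        rw [mul_pow, Real.sq_sqrt n.cast_nonneg]
    _ ≤ 4 ^ n := hsq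
    _ = (2 ^ n) ^ 2 := by rw [← pow_mul, mul_comm, pow_mul]; norm_num

end MiddleBinomial

section Imbalance

variable {V ι : Type*} [DecidableEq V]

/-- The imbalance of `S` under the bipartition of the ground set into `T` and its complement. For
`T = φ⁻¹(Y)` this is `|φ(S) ∩ Y| - |φ(S) ∩ Z|`, and `S` is `k`-unbalanced when it is at least `k` in
absolute value. -/
def imbalance (S T : Finset V) : ℤ := #(S ∩ T) - #(S \ T)

lemma imbalance_eq_two_mul_sub (S T : Finset V) : imbalance S T = 2 * #(S ∩ T) - #S := by
  rw [imbalance, ← card_inter_add_card_sdiff S T]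
  push_cast
  ring

lemma imbalance_inter (S T : Finset V) : imbalance S (S ∩ T) = imbalance S T := by
  simp only [imbalance_eq_two_mul_sub, inter_left_idem]

lemma card_powerset_filter_abs_imbalance_lt_le (S : Finset V) (k : ℕ) :
    #{T ∈ S.powerset | |imbalance S T| < k} ≤ k * (#S).choose (#S / 2) := by
  have hmaps : ∀ T ∈ {T ∈ S.powerset | |imbalance S T| < k},
      #T ∈ Ico ((#S + 2 - k) / 2) ((#S + 2 - k) / 2 + k) := by
    intro T hT
    obtain ⟨hTS, hbal⟩ := mem_filter.1 hT
    rw [imbalance_eq_two_mul_sub, inter_eq_right.2 (mem_powerset.1 hTS), abs_lt] at hbal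
    rw [mem_Ico]
    lia
  have hfiber : ∀ a ∈ Ico ((#S + 2 - k) / 2) ((#S + 2 - k) / 2 + k),
      #{T ∈ {T ∈ S.powerset | |imbalance S T| < k} | #T = a} ≤ (#S).choose (#S / 2) := by
    intro a _
    calc #{T ∈ {T ∈ S.powerset | |imbalance S T| < k} | #T = a} ≤ #(S.powersetCard a) := by
          refine card_le_card fun T hT => ?_
          simp only [mem_filter, mem_powerset] at hT
          exact mem_powersetCard.2 ⟨hT.1.1, hT.2⟩
      _ = (#S).choose a := card_powersetCard a S
      _ ≤ (#S).choose (#S / 2) := Nat.choose_le_middle a #S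
  simpa [mul_comm] using card_le_mul_card_image_of_maps_to hmaps _ hfiber

variable [Fintype V] [Fintype ι] {S : ι → Finset V}

lemma card_filter_forall_abs_imbalance_lt_le (hcover : univ.biUnion S = univ) (k : ℕ) :
    #{T : Finset V | ∀ i, |imbalance (S i) T| < k} ≤ ∏ i, k * (#(S i)).choose (#(S i) / 2) := by
  classical
  calc #{T : Finset V | ∀ i, |imbalance (S i) T| < k}
      ≤ #(Fintype.piFinset fun i => {T ∈ (S i).powerset | |imbalance (S i) T| < k}) := by
        refine card_le_card_of_injOn (fun T i => S i ∩ T) (fun T hT => ?_) fun T _ T' _ h => ?_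
        · simp_all [imbalance_inter, inter_subset_left]
        · have hT (T : Finset V) : univ.biUnion (fun i => S i ∩ T) = T := by
            rw [← biUnion_inter, hcover, univ_inter]
          rw [← hT T, ← hT T']
          exact congrArg univ.biUnion h
    _ = ∏ i, #{T ∈ (S i).powerset | |imbalance (S i) T| < k} := Fintype.card_piFinset _
    _ ≤ ∏ i, k * (#(S i)).choose (#(S i) / 2) :=
        prod_le_prod' fun i _ => card_powerset_filter_abs_imbalance_lt_le (S i) k

end Imbalance

section Partition

variable {V Y Z ι : Type*} [Fintype V]

/-- The set `φ⁻¹(Y)` of elements that the partition `φ` sends to `Y`. -/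
def leftPart (φ : V → Y ⊕ Z) : Finset V := {x | (φ x).isLeft}

lemma mem_leftPart {φ : V → Y ⊕ Z} {x : V} : x ∈ leftPart φ ↔ (φ x).isLeft := by
  simp [leftPart]

variable [DecidableEq V] [Fintype Y] [DecidableEq Y] [Fintype Z] [DecidableEq Z]

lemma card_equiv_leftPart_eq_le (T : Finset V) :
    #{e : V ≃ Y ⊕ Z | leftPart e = T} ≤
      (Fintype.card Y).factorial * (Fintype.card Z).factorial := by
  rcases eq_empty_or_nonempty {e : V ≃ Y ⊕ Z | leftPart e = T} with hempty | ⟨e₀, he₀⟩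
  · simp [hempty]
  have hmaps : ∀ e ∈ ({e : V ≃ Y ⊕ Z | leftPart e = T} : Finset _),
      e₀.symm.trans e ∈ univ.image (Equiv.Perm.sumCongrHom Y Z) := by
    intro e he
    have hleft (y : Y) : (e (e₀.symm (.inl y))).isLeft := by
      rw [← mem_leftPart, (mem_filter.1 he).2, ← (mem_filter.1 he₀).2, mem_leftPart]
      simp
    have hrange : e₀.symm.trans e ∈ (Equiv.Perm.sumCongrHom Y Z).range := by
      apply Equiv.Perm.mem_sumCongrHom_range_of_perm_mapsTo_inl
      rintro _ ⟨y, rfl⟩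
      obtain ⟨y', hy'⟩ := Sum.isLeft_iff.1 (hleft y)
      exact ⟨y', hy'.symm⟩
    simpa using hrange
  have hinj : Function.Injective fun e : V ≃ Y ⊕ Z => e₀.symm.trans e :=
    fun e e' h => Equiv.ext fun x => by simpa using Equiv.congr_fun h (e₀ x)
  calc #{e : V ≃ Y ⊕ Z | leftPart e = T}
      ≤ #(univ.image (Equiv.Perm.sumCongrHom Y Z)) :=
        card_le_card_of_injOn _ hmaps hinj.injOn
    _ ≤ Fintype.card (Equiv.Perm Y × Equiv.Perm Z) := card_image_le
    _ = (Fintype.card Y).factorial * (Fintype.card Z).factorial := by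
        rw [Fintype.card_prod, Fintype.card_perm, Fintype.card_perm]

lemma card_equiv_sum (hV : Fintype.card V = Fintype.card Y + Fintype.card Z) :
    Fintype.card (V ≃ Y ⊕ Z) = (Fintype.card Y).factorial * (Fintype.card Z).factorial *
      (Fintype.card V).choose (Fintype.card Y) := by
  rw [Fintype.card_equiv (Fintype.equivOfCardEq (hV.trans Fintype.card_sum.symm)), hV,
    ← Nat.add_choose_mul_factorial_mul_factorial, Nat.choose_symm_add]
  ring

variable [Fintype ι] {S : ι → Finset V}

lemma card_equiv_forall_abs_imbalance_lt_le (hcover : univ.biUnion S = univ) (k : ℕ) :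
    #{e : V ≃ Y ⊕ Z | ∀ i, |imbalance (S i) (leftPart e)| < k} ≤
      (Fintype.card Y).factorial * (Fintype.card Z).factorial *
        ∏ i, k * (#(S i)).choose (#(S i) / 2) := by
  calc #{e : V ≃ Y ⊕ Z | ∀ i, |imbalance (S i) (leftPart e)| < k}
      ≤ (Fintype.card Y).factorial * (Fintype.card Z).factorial *
          #{T : Finset V | ∀ i, |imbalance (S i) T| < k} := by
        refine card_le_mul_card_image_of_maps_to (f := fun e : V ≃ Y ⊕ Z => leftPart e)
          (fun e he => by simpa using he) _ fun T _ => ?_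
        exact (card_le_card (filter_subset_filter _ (subset_univ _))).trans
          (card_equiv_leftPart_eq_le T)
    _ ≤ _ := Nat.mul_le_mul_left _ (card_filter_forall_abs_imbalance_lt_le hcover k)

lemma unifProb_forall_abs_imbalance_lt_le_div_choose
    (hV : Fintype.card V = Fintype.card Y + Fintype.card Z) (hcover : univ.biUnion S = univ)
    (k : ℕ) :
    unifProb (fun e : V ≃ Y ⊕ Z => ∀ i, |imbalance (S i) (leftPart e)| < k) ≤
      (∏ i, (k * (#(S i)).choose (#(S i) / 2) : ℝ)) / (Fintype.card V).choose (Fintype.card Y) := by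
  have hcount : (#{e : V ≃ Y ⊕ Z | ∀ i, |imbalance (S i) (leftPart e)| < k} : ℝ) ≤
      (Fintype.card Y).factorial * (Fintype.card Z).factorial *
        ∏ i, (k * (#(S i)).choose (#(S i) / 2) : ℝ) := by
    exact_mod_cast card_equiv_forall_abs_imbalance_lt_le hcover k
  have hfactorials : ((Fintype.card Y).factorial * (Fintype.card Z).factorial : ℝ) ≠ 0 := by
    positivity
  rw [unifProb_eq, card_equiv_sum hV, Nat.cast_mul, Nat.cast_mul,
    ← mul_div_mul_left _ (Nat.cast _) hfactorials]
  gcongr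

lemma unifProb_forall_abs_imbalance_lt_le [Nonempty V] (hY : Fintype.card V = 2 * Fintype.card Y)
    (hZ : Fintype.card Z = Fintype.card Y) (hdisj : Pairwise (Function.onFun Disjoint S))
    (hcover : univ.biUnion S = univ) (hne : ∀ i, (S i).Nonempty) (k : ℕ) :
    unifProb (fun e : V ≃ Y ⊕ Z => ∀ i, |imbalance (S i) (leftPart e)| < k) ≤
      Fintype.card V * ∏ i, k / √(#(S i)) := by
  have hcard : ∑ i, #(S i) = Fintype.card V := by
    rw [← card_biUnion (hdisj.set_pairwise _), hcover, card_univ]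
  have hprod : (∏ i, (k * (#(S i)).choose (#(S i) / 2) : ℝ)) ≤
      2 ^ Fintype.card V * ∏ i, k / √(#(S i)) := by
    rw [← hcard, ← prod_pow_eq_pow_sum, ← prod_mul_distrib]
    refine prod_le_prod (fun i _ => by positivity) fun i _ => ?_
    rw [← mul_div_assoc, mul_comm _ (k : ℝ), mul_div_assoc]
    gcongr
    exact choose_half_le_two_pow_div_sqrt (hne i).card_pos
  have hchoose : (2 : ℝ) ^ Fintype.card V ≤
      Fintype.card V * (Fintype.card V).choose (Fintype.card Y) := by
    have hpos : 0 < Fintype.card Y := by have := Fintype.card_pos (α := V); lia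
    calc (2 : ℝ) ^ Fintype.card V = 4 ^ Fintype.card Y := by rw [hY, pow_mul]; norm_num
      _ ≤ Fintype.card V * (Fintype.card V).choose (Fintype.card Y) := by
          rw [hY]
          exact_mod_cast Nat.four_pow_le_two_mul_self_mul_centralBinom _ hpos
  have hchoose_pos : (0 : ℝ) < (Fintype.card V).choose (Fintype.card Y) := by
    exact_mod_cast Nat.choose_pos (by lia)
  refine (unifProb_forall_abs_imbalance_lt_le_div_choose (by lia) hcover k).trans ?_
  rw [div_le_iff₀ hchoose_pos, mul_right_comm]
  exact hprod.trans (by gcongr)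

end Partition

section Blocks

variable {α ι : Type*} {B : ι → Finset α}

lemma pairwise_disjoint_subtype (hB : ∀ i j, i ≠ j → Disjoint (B i) (B j)) (p : α → Prop)
    [DecidablePred p] : Pairwise (Function.onFun Disjoint fun i => (B i).subtype p) :=
  fun i j hij => disjoint_left.2 fun _ hi hj =>
    disjoint_left.1 (hB i j hij) (mem_subtype.1 hi) (mem_subtype.1 hj)

variable [DecidableEq α] [Fintype ι] (B)

lemma biUnion_subtype_biUnion :
    univ.biUnion (fun i => (B i).subtype (· ∈ univ.biUnion B)) = univ := by
  ext x
  obtain ⟨i, -, hi⟩ := mem_biUnion.1 x.2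
  simpa using ⟨i, hi⟩

lemma card_subtype_biUnion (i : ι) : #((B i).subtype (· ∈ univ.biUnion B)) = #(B i) := by
  rw [card_subtype, filter_true_of_mem (subset_biUnion_of_mem B (mem_univ i))]

end Blocks

lemma kUnbOn_iff_le_abs_imbalance {h : ℕ} {X : Finset ℕ} (φ : {x // x ∈ X} → Fin h ⊕ Fin h)
    (k : ℕ) (S : Finset ℕ) :
    kUnbOn X φ k S ↔ (k : ℤ) ≤ |imbalance (S.subtype (· ∈ X)) (leftPart φ)| := by
  have hY : S.subtype (· ∈ X) ∩ leftPart φ =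
      X.attach.filter fun x => x.1 ∈ S ∧ (φ x).isLeft = true := by
    ext x; simp [mem_leftPart]
  have hZ : S.subtype (· ∈ X) \ leftPart φ =
      X.attach.filter fun x => x.1 ∈ S ∧ (φ x).isRight = true := by
    ext x; simp [mem_leftPart]
  rw [kUnbOn, imbalance, hY, hZ]

section Asymptotics

lemma two_rpow_mul_logb {x : ℝ} (hx : 0 < x) (y : ℝ) : (2 : ℝ) ^ (y * Real.logb 2 x) = x ^ y := by
  rw [mul_comm, Real.rpow_mul two_pos.le, Real.rpow_logb two_pos (by norm_num) hx]

lemma two_rpow_neg_mul_rpow_mul_logb_le {c N s t : ℝ} (hc : 0 ≤ c) (hN : 1 ≤ N) (hst : s ≤ t) :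
    (2 : ℝ) ^ (-(c * N ^ t * Real.logb 2 N)) ≤ 2 ^ (-(c * N ^ s * Real.logb 2 N)) := by
  have hlog : 0 ≤ Real.logb 2 N := Real.logb_nonneg one_lt_two hN
  gcongr
  exact one_le_two

lemma rpow_one_sub_le_two_mul {N α m : ℝ} (hN : 1 ≤ N) (hα : 0 ≤ α) (hm : 0 ≤ m)
    (h : ⌈N ^ α⌉₊ * m = N) : N ^ (1 - α) ≤ 2 * m := by
  have hNα : 1 ≤ N ^ α := Real.one_le_rpow hN hα
  have hceil : (⌈N ^ α⌉₊ : ℝ) ≤ 2 * N ^ α := Nat.ceil_le_two_mul (by linarith)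
  rw [Real.rpow_sub (by linarith), Real.rpow_one, div_le_iff₀ (by linarith)]
  calc N = ⌈N ^ α⌉₊ * m := h.symm
    _ ≤ 2 * N ^ α * m := by gcongr
    _ = 2 * m * N ^ α := by ring

lemma div_sqrt_le_rpow_neg {N α ε m k : ℝ} (hN : 1 ≤ N) (hα : α ≤ 1 - ε)
    (hε : 2 ≤ N ^ (ε / 4)) (hm : N ^ (1 - α) ≤ 2 * m) (hk₀ : 0 ≤ k)
    (hk : k ≤ N ^ ((1 - α) / 4)) : k / √m ≤ N ^ (-(ε / 8)) := by
  have hN₀ : 0 < N := by linarith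
  have hm₀ : 0 < m := by linarith [Real.rpow_pos_of_pos hN₀ (1 - α)]
  have hhalf : N ^ (-(ε / 4)) ≤ 2⁻¹ := by
    rw [Real.rpow_neg hN₀.le]
    gcongr
  rw [div_le_iff₀ (by positivity)]
  refine (sq_le_sq₀ hk₀ (by positivity)).1 ?_
  calc k ^ 2 ≤ (N ^ ((1 - α) / 4)) ^ 2 := by gcongr
    _ = N ^ ((1 - α) / 4 * 2) := by rw [Real.rpow_mul hN₀.le, Real.rpow_two]
    _ ≤ N ^ (-(ε / 4) + (-(ε / 4) + (1 - α))) := by gcongr; linarith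
    _ = N ^ (-(ε / 4)) * (N ^ (-(ε / 4)) * N ^ (1 - α)) := by
        rw [Real.rpow_add hN₀, Real.rpow_add hN₀]
    _ ≤ N ^ (-(ε / 4)) * (2⁻¹ * (2 * m)) := by gcongr
    _ = N ^ (-(ε / 8) * 2) * m := by ring_nf
    _ = (N ^ (-(ε / 8)) * √m) ^ 2 := by
        rw [mul_pow, Real.sq_sqrt hm₀.le, Real.rpow_mul hN₀.le, Real.rpow_two]

lemma mul_rpow_neg_pow_le {N α ε : ℝ} {d : ℕ} (hN : 1 ≤ N) (hε : 0 < ε) (hd : N ^ α ≤ d)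
    (hαε : 16 / ε ≤ N ^ α) : N * (N ^ (-(ε / 8))) ^ d ≤ N ^ (-(ε / 16 * N ^ α)) := by
  have hN₀ : 0 < N := by linarith
  have hlarge : 16 ≤ N ^ α * ε := (div_le_iff₀ hε).1 hαε
  calc N * (N ^ (-(ε / 8))) ^ d = N ^ (1 + -(ε / 8) * d) := by
        rw [Real.rpow_add hN₀, Real.rpow_one, Real.rpow_mul hN₀.le, Real.rpow_natCast]
    _ ≤ N ^ (-(ε / 16 * N ^ α)) := by
        gcongr
        nlinarith

lemma exists_nat_forall_le_rpow {s : ℝ} (hs : 0 < s) (B : ℝ) :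
    ∃ N₀ : ℕ, ∀ N : ℕ, N₀ ≤ N → B ≤ (N : ℝ) ^ s :=
  (((tendsto_rpow_atTop hs).comp tendsto_natCast_atTop_atTop).eventually_ge_atTop
    B).exists_forall_of_atTop

end Asymptotics

section EqualBlocks

variable {V Y Z ι : Type*} [Fintype V] [DecidableEq V] [Fintype Y] [DecidableEq Y]
  [Fintype Z] [DecidableEq Z] [Fintype ι] {S : ι → Finset V} {N m : ℕ} {α : ℝ}

lemma unifProb_forall_abs_imbalance_lt_le_two_rpow {ε : ℝ} (hε : 0 < ε) (hN : 1 ≤ N)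
    (hN_fourth : 2 ≤ (N : ℝ) ^ (ε / 4)) (hN_alpha : 16 / ε ≤ (N : ℝ) ^ α)
    (hV : Fintype.card V = N) (hY : N = 2 * Fintype.card Y)
    (hZ : Fintype.card Z = Fintype.card Y) (hα : 0 ≤ α) (hαε : α ≤ 1 - ε)
    (hι : Fintype.card ι = ⌈(N : ℝ) ^ α⌉₊) (hdisj : Pairwise (Function.onFun Disjoint S))
    (hcover : univ.biUnion S = univ) (hm : ∀ i, #(S i) = m) {k : ℕ}
    (hk : (k : ℝ) ≤ (N : ℝ) ^ ((1 - α) / 4)) :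
    unifProb (fun e : V ≃ Y ⊕ Z => ∀ i, |imbalance (S i) (leftPart e)| < k) ≤
      (2 : ℝ) ^ (-(ε / 16 * (N : ℝ) ^ α * Real.logb 2 N)) := by
  have hN_one : (1 : ℝ) ≤ N := by exact_mod_cast hN
  have hcard : ⌈(N : ℝ) ^ α⌉₊ * m = N := by
    calc ⌈(N : ℝ) ^ α⌉₊ * m = ∑ i, #(S i) := by simp [hm, hι]
      _ = N := by rw [← card_biUnion (hdisj.set_pairwise _), hcover, card_univ, hV]
  have hm_pos : 0 < m := Nat.pos_of_mul_pos_left (hcard ▸ hN)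
  have : Nonempty V := Fintype.card_pos_iff.1 (hV ▸ hN)
  have hfactor : (k : ℝ) / √m ≤ (N : ℝ) ^ (-(ε / 8)) :=
    div_sqrt_le_rpow_neg hN_one hαε hN_fourth
      (rpow_one_sub_le_two_mul hN_one hα m.cast_nonneg (by exact_mod_cast hcard)) k.cast_nonneg hk
  calc unifProb (fun e : V ≃ Y ⊕ Z => ∀ i, |imbalance (S i) (leftPart e)| < k)
      ≤ Fintype.card V * ∏ i, k / √(#(S i)) :=
        unifProb_forall_abs_imbalance_lt_le (hV.trans hY) hZ hdisj hcover
          (fun i => card_pos.1 (hm i ▸ hm_pos)) k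
    _ = N * (k / √m) ^ ⌈(N : ℝ) ^ α⌉₊ := by
        simp only [hm, hV, prod_const, card_univ, hι]
    _ ≤ N * ((N : ℝ) ^ (-(ε / 8))) ^ ⌈(N : ℝ) ^ α⌉₊ := by gcongr
    _ ≤ (N : ℝ) ^ (-(ε / 16 * (N : ℝ) ^ α)) :=
        mul_rpow_neg_pow_le hN_one hε (Nat.le_ceil _) hN_alpha
    _ = (2 : ℝ) ^ (-(ε / 16 * (N : ℝ) ^ α * Real.logb 2 N)) := by
        rw [← two_rpow_mul_logb (by linarith), neg_mul]

end EqualBlocks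

theorem exists_unbalanced_sparse_block_general {a ε : ℝ} (ha : 0 < a) (hε : 0 < ε) :
    ∃ c : ℝ, 0 < c ∧ ∃ N₀ : ℕ, ∀ (V Y Z ι : Type*) [Fintype V] [DecidableEq V]
      [Fintype Y] [DecidableEq Y] [Fintype Z] [DecidableEq Z] [Fintype ι] (N m : ℕ),
      N₀ ≤ N → Fintype.card V = N → N = 2 * Fintype.card Y → Fintype.card Z = Fintype.card Y →
      ∀ α : ℝ, a ≤ α → α ≤ 1 - ε → Fintype.card ι = ⌈(N : ℝ) ^ α⌉₊ →
      ∀ S : ι → Finset V, Pairwise (Function.onFun Disjoint S) → univ.biUnion S = univ →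
        (∀ i, #(S i) = m) →
      ∀ k : ℕ, (k : ℝ) ≤ (N : ℝ) ^ ((1 - α) / 4) →
        1 - (2 : ℝ) ^ (-(c * (N : ℝ) ^ α * Real.logb 2 N)) ≤
          unifProb (fun e : V ≃ Y ⊕ Z => ∃ i, (k : ℤ) ≤ |imbalance (S i) (leftPart e)|) := by
  obtain ⟨N₁, hN₁⟩ := exists_nat_forall_le_rpow (s := ε / 4) (by positivity) 2
  obtain ⟨N₂, hN₂⟩ := exists_nat_forall_le_rpow ha (16 / ε)
  refine ⟨ε / 16, by positivity, max 1 (max N₁ N₂), ?_⟩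
  intro V Y Z ι _ _ _ _ _ _ _ N m hN hV hY hZ α haα hαε hι S hdisj hcover hm k hk
  simp only [max_le_iff] at hN
  have hN_alpha : 16 / ε ≤ (N : ℝ) ^ α := (hN₂ N hN.2.2).trans <|
    Real.rpow_le_rpow_of_exponent_le (by exact_mod_cast hN.1) haα
  have : Nonempty (V ≃ Y ⊕ Z) := ⟨Fintype.equivOfCardEq (by rw [Fintype.card_sum]; lia)⟩
  calc 1 - (2 : ℝ) ^ (-(ε / 16 * (N : ℝ) ^ α * Real.logb 2 N))
      ≤ 1 - unifProb (fun e : V ≃ Y ⊕ Z => ∀ i, |imbalance (S i) (leftPart e)| < k) := by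
        gcongr
        exact unifProb_forall_abs_imbalance_lt_le_two_rpow hε hN.1 (hN₁ N hN.2.1) hN_alpha
          hV hY hZ (ha.le.trans haα) hαε hι hdisj hcover hm hk
    _ = unifProb (fun e : V ≃ Y ⊕ Z => ∃ i, (k : ℤ) ≤ |imbalance (S i) (leftPart e)|) := by
        rw [← unifProb_not]
        simp only [not_forall, not_lt]

end

/-- With high probability under a random partition, one of the variable blocks of an
α-sparse ROABP is k-unbalanced. -/
theorem exists_unbalanced_sparse_block :
    ∃ c : ℝ, 0 < c ∧ ∃ N₀ : ℕ, ∀ (N h : ℕ), N₀ ≤ N → N = 2 * h →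
      ∀ (α : ℝ), 1/10 < α → α ≤ 1/2 →
      ∀ (d : ℕ), d = ⌈(N : ℝ) ^ α⌉₊ → d ∣ N →
      ∀ (X : Finset ℕ), X.card = N →
      ∀ (Xs : Fin d → Finset ℕ),
        (∀ i j, i ≠ j → Disjoint (Xs i) (Xs j)) →
        Finset.univ.biUnion Xs = X →
        (∀ i, (Xs i).card = N / d) →
      ∀ (k : ℕ), 1 ≤ k → (k : ℝ) ≤ (N : ℝ) ^ ((1 - α)/4) →
        1 - (2 : ℝ) ^ (-(c * (N : ℝ) ^ ((1 : ℝ)/10) * Real.logb 2 N)) ≤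
          unifProb (fun e : {x // x ∈ X} ≃ (Fin h ⊕ Fin h) =>
            ∃ i, kUnbOn X (fun x => e x) k (Xs i)) := by
  obtain ⟨c, hc, N₀, H⟩ :=
    exists_unbalanced_sparse_block_general (a := 1/10) (ε := 1/2) (by norm_num) (by norm_num)
  refine ⟨c, hc, max 1 N₀, ?_⟩
  rintro N h hN hNh α hα hα' d hd - X hX Xs hdisj rfl hcard k - hk
  simp only [max_le_iff] at hN
  refine (sub_le_sub_left
    (two_rpow_neg_mul_rpow_mul_logb_le hc.le (by exact_mod_cast hN.1) hα.le) 1).trans ?_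
  simp only [kUnbOn_iff_le_abs_imbalance]
  exact H _ _ _ _ N (N / d) hN.2 ((Fintype.card_coe _).trans hX) (by simp [hNh]) rfl α hα.le
    (by linarith) (by simp [hd]) _ (pairwise_disjoint_subtype hdisj _) (biUnion_subtype_biUnion Xs)
    (fun i => (card_subtype_biUnion Xs i).trans (hcard i)) k hk

end
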